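/- Let $P$ be a nonempty finite family of pairs $(\ell, y)$ where $\ell = (p_1, \dots, p_{k_\ell})$ is a nonempty finite list of real numbers in $(0,1)$ and $y \in \{0,1\}$. Define the likelihood loss $L^{mle} = -\frac{1}{|P|} \sum_{(\ell,y) \in P} \left[ y \sum_{t=1}^{k_\ell} \log p_t + (1-y) \log\left(1 - \prod_{t=1}^{k_\ell} p_t\right) \right]$ and the surrogate loss $L^{sur} = -\frac{1}{|P|} \sum_{(\ell,y) \in P} \left[ y \sum_{t=1}^{k_\ell} \log p_t + (1-y) \sum_{t=1}^{k_\ell} \log(1 - p_t) \right]$. Then $L^{sur} \geq L^{mle}$. -/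

import Mathlib

theorem List.prod_mem_Icc_of_forall_mem_Ioo {l : List ℝ} (hl : ∀ p ∈ l, p ∈ Set.Ioo (0 : ℝ) 1) :
    l.prod ∈ Set.Icc (0 : ℝ) 1 := by
  induction l with
  | nil => simp
  | cons p l ih =>
    obtain ⟨hp, hl⟩ := List.forall_mem_cons.mp hl
    rw [List.prod_cons]
    exact unitInterval.mul_mem (Set.Ioo_subset_Icc_self hp) (ih hl)

theorem List.sum_log_one_sub_le_log_one_sub_prod {l : List ℝ} (hne : l ≠ [])
    (hl : ∀ p ∈ l, p ∈ Set.Ioo (0 : ℝ) 1) :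
    (l.map fun p => Real.log (1 - p)).sum ≤ Real.log (1 - l.prod) := by
  obtain ⟨p, l, rfl⟩ := List.exists_cons_of_ne_nil hne
  obtain ⟨⟨hp0, hp1⟩, hl⟩ := List.forall_mem_cons.mp hl
  have hsum : (l.map fun p => Real.log (1 - p)).sum ≤ 0 := by
    refine (List.sum_le_sum (g := fun _ => (0 : ℝ)) fun q hq => ?_).trans_eq (by simp)
    obtain ⟨hq0, hq1⟩ := hl q hq
    exact Real.log_nonpos (by linarith) (by linarith)
  have hprod := (List.prod_mem_Icc_of_forall_mem_Ioo hl).2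
  have hlog : Real.log (1 - p) ≤ Real.log (1 - p * l.prod) :=
    Real.log_le_log (by linarith) (by nlinarith)
  rw [List.map_cons, List.sum_cons, List.prod_cons]
  linarith

/-- Proposition 1: the surrogate loss `L^sur` is an upper bound on the
likelihood loss `L^mle`.

The feedback dataset `P` is modelled by a nonempty finite index set `P : Finset ι`,
where for each `i ∈ P`, `ℓ i` is the nonempty list of estimated safety
probabilities (each in `(0,1)`) of the states in the segment, and `y i ∈ {0,1}`
is the evaluator's binary label. -/
theorem surrogate_loss_ge_likelihood_loss {ι : Type*} (P : Finset ι) (hP : P.Nonempty)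
    (ℓ : ι → List ℝ) (y : ι → ℝ)
    (hℓne : ∀ i ∈ P, ℓ i ≠ [])
    (hℓ : ∀ i ∈ P, ∀ p ∈ ℓ i, p ∈ Set.Ioo (0 : ℝ) 1)
    (hy : ∀ i ∈ P, y i = 0 ∨ y i = 1) :
    -(1 / (P.card : ℝ)) * ∑ i ∈ P,
        (y i * ((ℓ i).map Real.log).sum
          + (1 - y i) * ((ℓ i).map (fun p => Real.log (1 - p))).sum)
    ≥
    -(1 / (P.card : ℝ)) * ∑ i ∈ P,
        (y i * ((ℓ i).map Real.log).sum
          + (1 - y i) * Real.log (1 - (ℓ i).prod)) := by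
  refine mul_le_mul_of_nonpos_left (Finset.sum_le_sum fun i hi => ?_)
    (neg_nonpos.mpr (by positivity))
  have hy1 : 0 ≤ 1 - y i := by rcases hy i hi with h | h <;> simp [h]
  gcongr
  exact List.sum_log_one_sub_le_log_one_sub_prod (hℓne i hi) (hℓ i hi)
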